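/- arXiv:0903.5078 — 11 statements merged into one kernel-verified Lean document; each statement's English description precedes it below -/
import Mathlib

section
/- Let S : V × V → ℝ be a bilinear form satisfying S(J u, v) + S(u, J v) = 0 for all u, v, and define (R^H·S)(U,V,X,Y) = −S(R^H(U,V)X, Y) − S(X, R^H(U,V)Y). Then for all U, V, X, Y ∈ V: (R^H·S)(U,V,X,Y) = −⟪V,X⟫S(U,Y) + ⟪U,X⟫S(V,Y) − ⟪V,Y⟫S(X,U) + ⟪U,Y⟫S(X,V) − ⟪JV,X⟫S(JU,Y) + ⟪JU,X⟫S(JV,Y) − ⟪JV,Y⟫S(X,JU) + ⟪JU,Y⟫S(X,JV). -/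
open RealInnerProductSpace

/-- The holomorphic curvature operator `R^H` on a real inner product space with an
(orthogonal) complex structure `J`. -/
noncomputable def RH {V : Type*} [NormedAddCommGroup V] [InnerProductSpace ℝ V]
    (J : V →ₗ[ℝ] V) (U W X : V) : V :=
  ⟪W, X⟫ • U - ⟪U, X⟫ • W + ⟪J W, X⟫ • (J U) - ⟪J U, X⟫ • (J W) - (2 * ⟪J U, W⟫) • (J X)

/-- For a bilinear form `S` with `S(Ju,v) + S(u,Jv) = 0`, the derivation action
`(R^H·S)(U,V,X,Y) = −S(R^H(U,V)X,Y) − S(X,R^H(U,V)Y)` is given by the stated formula. -/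
theorem stmt1 {V : Type*} [NormedAddCommGroup V] [InnerProductSpace ℝ V]
    (J : V →ₗ[ℝ] V) (hJJ : ∀ v, J (J v) = -v)
    (hJi : ∀ u v, ⟪J u, J v⟫ = ⟪u, v⟫)
    (S : V →ₗ[ℝ] V →ₗ[ℝ] ℝ) (hSJ : ∀ u v, S (J u) v + S u (J v) = 0) :
    ∀ U W X Y : V,
      -S (RH J U W X) Y - S X (RH J U W Y) =
        -⟪W, X⟫ * S U Y + ⟪U, X⟫ * S W Y - ⟪W, Y⟫ * S X U + ⟪U, Y⟫ * S X W
          - ⟪J W, X⟫ * S (J U) Y + ⟪J U, X⟫ * S (J W) Y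
          - ⟪J W, Y⟫ * S X (J U) + ⟪J U, Y⟫ * S X (J W) := by
  intro U W X Y
  simp only [RH, map_add, map_sub, map_smul, LinearMap.add_apply, LinearMap.sub_apply,
    LinearMap.smul_apply, smul_eq_mul]
  -- The two `J`-terms of `R^H` contribute `2⟪J U, W⟫ (S (J X) Y + S X (J Y))`, which is zero.
  linear_combination (2 * ⟪J U, W⟫) * hSJ X Y
end

section
/- Suppose V has finite dimension 2n with orthonormal basis (b_i), and let S : V × V → ℝ be a symmetric bilinear form satisfying S(J u, J v) = S(u, v) for all u, v. Define (R^H·S)(U,V,X,Y) = −S(R^H(U,V)X, Y) − S(X, R^H(U,V)Y). Then for all U, X ∈ V: Σ_i (R^H·S)(b_i, U, X, b_i) = 2n·S(U,X) − (Σ_i S(b_i, b_i))·⟪U,X⟫. -/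
/-!
The sum is computed term by term. Since `J` is orthogonal with `J² = -1`, it is skew-adjoint, so
`⟪J b, b⟫ = 0`; likewise `S (J b) b = 0` by the symmetry and `J`-invariance of `S`. After expanding
`R^H` with these facts, each remaining term is a multiple of `S b b`, of the constant `S X U`, or
of the form `⟪b, Y⟫ * f b` with `f` linear. By Parseval (`sum_inner_mul_apply`) the last kind sums
to `f Y`. The first slot contributes `-2 S(U,X) - (tr S)⟪U,X⟫` and the second one
`(2n + 2) S(U,X)`.
-/

open RealInnerProductSpace

/-- Parseval's expansion of `Y`, evaluated on a linear functional. -/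
lemma sum_inner_mul_apply {V ι : Type*} [NormedAddCommGroup V] [InnerProductSpace ℝ V] [Fintype ι]
    (b : OrthonormalBasis ι ℝ V) (f : V →ₗ[ℝ] ℝ) (Y : V) :
    ∑ i, ⟪b i, Y⟫ * f (b i) = f Y := by
  conv_rhs => rw [← b.sum_repr' Y]
  simp

/-- Trace identity: for a symmetric bilinear form `S` with `S(Ju,Jv) = S(u,v)` on a
`2n`-dimensional space with orthonormal basis `(b i)`,
`Σ_i (R^H·S)(b_i,U,X,b_i) = 2n·S(U,X) − (tr S)·⟪U,X⟫`. -/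
theorem stmt2 {V : Type*} [NormedAddCommGroup V] [InnerProductSpace ℝ V]
    (J : V →ₗ[ℝ] V) (hJJ : ∀ v, J (J v) = -v)
    (hJi : ∀ u v, ⟪J u, J v⟫ = ⟪u, v⟫)
    (n : ℕ) (b : OrthonormalBasis (Fin (2 * n)) ℝ V)
    (S : V →ₗ[ℝ] V →ₗ[ℝ] ℝ) (hSsym : ∀ u v, S u v = S v u)
    (hSJ : ∀ u v, S (J u) (J v) = S u v) :
    ∀ U X : V,
      ∑ i, (-S (RH J (b i) U X) (b i) - S X (RH J (b i) U (b i))) =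
        (2 * n : ℝ) * S U X - (∑ i, S (b i) (b i)) * ⟪U, X⟫ := by
  intro U X
  have hskew : ∀ u v, ⟪J u, v⟫ = -⟪u, J v⟫ := fun u v => by
    rw [← hJi u (J v), hJJ, inner_neg_right, neg_neg]
  have hJb : ∀ v, ⟪v, J v⟫ = 0 := fun v => by
    have := hskew v v
    rw [real_inner_comm] at this
    linarith
  have hSb : ∀ v, S (J v) v = 0 := fun v => by
    have h := hSJ (J v) v
    rw [hJJ, map_neg, LinearMap.neg_apply, hSsym v (J v)] at h
    linarith
  have hterm : ∀ i, -S (RH J (b i) U X) (b i) - S X (RH J (b i) U (b i)) =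
      S X U - S (b i) (b i) * ⟪U, X⟫ + ⟪b i, X⟫ * S U (b i) - ⟪b i, J X⟫ * S (J U) (b i)
        - 2 * (⟪b i, J U⟫ * S (J X) (b i)) - ⟪b i, U⟫ * S X (b i)
        - 3 * (⟪b i, J U⟫ * (S X ∘ₗ J) (b i)) := fun i => by
    have h1 : ⟪b i, b i⟫ = 1 := by simp
    simp only [RH, map_add, map_sub, map_smul, LinearMap.add_apply, LinearMap.sub_apply,
      LinearMap.smul_apply, smul_eq_mul, LinearMap.comp_apply, hSb, h1]
    rw [hskew (b i) X, hskew (b i) U, hskew (b i) (b i), hJb, real_inner_comm (b i) U,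
      real_inner_comm (b i) (J U)]
    ring
  simp only [hterm, Finset.sum_sub_distrib, Finset.sum_add_distrib, ← Finset.mul_sum,
    sum_inner_mul_apply, ← Finset.sum_mul]
  simp only [LinearMap.comp_apply, hJJ, hSJ, map_neg, hSsym X U, Finset.sum_const,
    Finset.card_univ, Fintype.card_fin, nsmul_eq_mul]
  push_cast
  ring
end

section
/- Let R be a Kähler curvature tensor with Ricci tensor S, and define the holomorphic projective curvature tensor P by P(W,X,Y,Z) = R(W,X,Y,Z) − (1/(2(n+1)))·(S(X,Y)⟪W,Z⟫ − S(W,Y)⟪X,Z⟫ + S(JX,Y)⟪JW,Z⟫ − S(JW,Y)⟪JX,Z⟫ − 2 S(JW,X)⟪JY,Z⟫). Then, with all sums over the orthonormal basis (b_i): Σ_{i,j,k,l} P(b_i,b_j,b_k,b_l)² = Σ_{i,j,k,l} P(b_i,b_j,b_k,b_l)·R(b_i,b_j,b_k,b_l) = Σ_{i,j,k,l} R(b_i,b_j,b_k,b_l)² − (4/(n+1))·Σ_{i,j} S(b_i,b_j)². In particular Σ_{i,j,k,l} R(b_i,b_j,b_k,b_l)² ≥ (4/(n+1))·Σ_{i,j}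 S(b_i,b_j)². -/
/-!
Let `T` be the algebraic correction term, so that `P = R − T / (2(n+1))`.
Pairing `T` with any tensor `F(W,X,Y,Z)` that is linear in `Z` and skew in `W, X` only involves the
three traces `∑ F(bᵢ,X,Y,bᵢ)`, `∑ F(bᵢ,X,Y,J bᵢ)` and `∑ F(W,X,bᵢ,J bᵢ)`. If these equal
`m S(X,Y)`, `m S(JX,Y)` and `−2 m S(JW,X)`, then `⟨T,F⟩ = 8 m ‖S‖²` (`sum_corr_mul`).

For `F = R` the Kähler symmetries and the Bianchi identity give `m = 1`; for `F = T` a direct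
contraction gives `m = 2(n+1)`. Hence `⟨T,R⟩ = 8‖S‖²` and `⟨T,T⟩ = 16(n+1)‖S‖²`, so that `P` is
orthogonal to `T`; expanding `P = R − T / (2(n+1))` yields both identities, and the inequality is
`‖P‖² ≥ 0`.
-/

open RealInnerProductSpace

section HolomorphicProjective

variable {V ι : Type*} [NormedAddCommGroup V] [InnerProductSpace ℝ V] [Fintype ι]

/-- The correction term `T` of the holomorphic projective curvature tensor, for a bilinear form `S`
in the role of the Ricci tensor: `P = R − T / (2(n+1))`. -/
def corr (J : V →ₗ[ℝ] V) (S : V →ₗ[ℝ] V →ₗ[ℝ] ℝ) (W X Y Z : V) : ℝ :=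
  S X Y * ⟪W, Z⟫ - S W Y * ⟪X, Z⟫ + S (J X) Y * ⟪J W, Z⟫
    - S (J W) Y * ⟪J X, Z⟫ - 2 * S (J W) X * ⟪J Y, Z⟫

/-- Contracting a linear form against `⟪v, ·⟫` over an orthonormal basis evaluates it at `v`. -/
lemma sum_mul_inner (b : OrthonormalBasis ι ℝ V) (f : V →ₗ[ℝ] ℝ) (v : V) :
    ∑ i, f (b i) * ⟪v, b i⟫ = f v := by
  conv_rhs => rw [← b.sum_repr' v, map_sum]
  refine Finset.sum_congr rfl fun i _ => ?_
  rw [map_smul, smul_eq_mul, real_inner_comm, mul_comm]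

lemma inner_J_right (J : V →ₗ[ℝ] V) (hJJ : ∀ v, J (J v) = -v)
    (hJi : ∀ u v, ⟪J u, J v⟫ = ⟪u, v⟫) (u v : V) : ⟪u, J v⟫ = -⟪J u, v⟫ := by
  rw [← hJi u (J v), hJJ, inner_neg_right]

lemma inner_J_self (J : V →ₗ[ℝ] V) (hJJ : ∀ v, J (J v) = -v)
    (hJi : ∀ u v, ⟪J u, J v⟫ = ⟪u, v⟫) (v : V) : ⟪J v, v⟫ = 0 := by
  have h := inner_J_right J hJJ hJi v v
  rw [real_inner_comm] at h
  linarith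

/-- The trace of a bilinear form is the same over the orthonormal bases `b` and `J b`. -/
lemma sum_J_J (J : V →ₗ[ℝ] V) (hJJ : ∀ v, J (J v) = -v)
    (hJi : ∀ u v, ⟪J u, J v⟫ = ⟪u, v⟫) (b : OrthonormalBasis ι ℝ V)
    (F : V →ₗ[ℝ] V →ₗ[ℝ] ℝ) : ∑ i, F (J (b i)) (J (b i)) = ∑ i, F (b i) (b i) := by
  have h1 (i : ι) : F (J (b i)) (J (b i)) = ∑ j, F (b j) (J (b i)) * ⟪J (b i), b j⟫ :=
    (sum_mul_inner b (F.flip (J (b i))) (J (b i))).symm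
  have h2 (j : ι) : F (b j) (b j) = ∑ i, F (b j) (J (b i)) * ⟪J (b i), b j⟫ := by
    have h := sum_mul_inner b ((F (b j)).comp J) (J (b j))
    simp only [LinearMap.comp_apply, hJJ, map_neg] at h
    rw [eq_comm, neg_eq_iff_eq_neg] at h
    rw [h, ← Finset.sum_neg_distrib]
    refine Finset.sum_congr rfl fun i _ => ?_
    rw [real_inner_comm (b i) (J (b j)), inner_J_right J hJJ hJi]
    ring
  simp_rw [h1, h2]
  exact Finset.sum_comm

/-- The pairing of the correction term with a tensor `F` whose three traces are those of a Kähler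
curvature tensor with Ricci tensor `m S`. -/
lemma sum_corr_mul (J : V →ₗ[ℝ] V) (hJJ : ∀ v, J (J v) = -v)
    (hJi : ∀ u v, ⟪J u, J v⟫ = ⟪u, v⟫) (b : OrthonormalBasis ι ℝ V)
    (S : V →ₗ[ℝ] V →ₗ[ℝ] ℝ) (F : V → V → V → V →ₗ[ℝ] ℝ) (m : ℝ)
    (hF : ∀ W X Y Z, F W X Y Z = -F X W Y Z)
    (h1 : ∀ X Y, ∑ i, F (b i) X Y (b i) = m * S X Y)
    (h2 : ∀ X Y, ∑ i, F (b i) X Y (J (b i)) = m * S (J X) Y)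
    (h3 : ∀ W X, ∑ i, F W X (b i) (J (b i)) = -2 * m * S (J W) X) :
    ∑ i, ∑ j, ∑ k, ∑ l, corr J S (b i) (b j) (b k) (b l) * F (b i) (b j) (b k) (b l)
      = 8 * m * ∑ i, ∑ j, S (b i) (b j) ^ 2 := by
  have hl (W X Y : V) : ∑ l, corr J S W X Y (b l) * F W X Y (b l) =
      S X Y * F W X Y W + S W Y * F X W Y X + S (J X) Y * F W X Y (J W)
        + S (J W) Y * F X W Y (J X) - 2 * (S (J W) X * F W X Y (J Y)) := by
    rw [hF X W Y X, hF X W Y (J X), ← sum_mul_inner b (F W X Y) W, ← sum_mul_inner b (F W X Y) X,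
      ← sum_mul_inner b (F W X Y) (J W), ← sum_mul_inner b (F W X Y) (J X),
      ← sum_mul_inner b (F W X Y) (J Y)]
    simp only [← Finset.sum_neg_distrib, Finset.mul_sum, ← Finset.sum_add_distrib,
      ← Finset.sum_sub_distrib]
    refine Finset.sum_congr rfl fun l _ => ?_
    rw [corr]
    ring
  have hJS : ∑ i, ∑ j, S (J (b i)) (b j) ^ 2 = ∑ i, ∑ j, S (b i) (b j) ^ 2 := by
    rw [Finset.sum_comm, Finset.sum_comm (f := fun i j => S (b i) (b j) ^ 2)]
    refine Finset.sum_congr rfl fun j _ => ?_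
    simpa [sq] using sum_J_J J hJJ hJi b
      ((LinearMap.mul ℝ ℝ).compl₁₂ (S.flip (b j)) (S.flip (b j)))
  -- After the contraction over `Z`, each remaining sum contains exactly one of the three traces.
  have e1 : ∑ i, ∑ j, ∑ k, S (b j) (b k) * F (b i) (b j) (b k) (b i)
      = m * ∑ i, ∑ j, S (b i) (b j) ^ 2 := by
    rw [Finset.sum_comm, Finset.mul_sum]
    refine Finset.sum_congr rfl fun j _ => ?_
    rw [Finset.sum_comm, Finset.mul_sum]
    refine Finset.sum_congr rfl fun k _ => ?_
    rw [← Finset.mul_sum, h1]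
    ring
  have e2 : ∑ i, ∑ j, ∑ k, S (J (b j)) (b k) * F (b i) (b j) (b k) (J (b i))
      = m * ∑ i, ∑ j, S (b i) (b j) ^ 2 := by
    rw [← hJS, Finset.sum_comm, Finset.mul_sum]
    refine Finset.sum_congr rfl fun j _ => ?_
    rw [Finset.sum_comm, Finset.mul_sum]
    refine Finset.sum_congr rfl fun k _ => ?_
    rw [← Finset.mul_sum, h2]
    ring
  have e3 : ∑ i, ∑ j, ∑ k, S (J (b i)) (b j) * F (b i) (b j) (b k) (J (b k))
      = -2 * m * ∑ i, ∑ j, S (b i) (b j) ^ 2 := by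
    rw [← hJS, Finset.mul_sum]
    refine Finset.sum_congr rfl fun i _ => ?_
    rw [Finset.mul_sum]
    refine Finset.sum_congr rfl fun j _ => ?_
    rw [← Finset.mul_sum, h3]
    ring
  have e1' := e1
  have e2' := e2
  rw [Finset.sum_comm] at e1' e2'
  simp_rw [hl]
  simp only [Finset.sum_add_distrib, Finset.sum_sub_distrib, ← Finset.mul_sum]
  simp only [← Finset.mul_sum] at e3
  rw [e1, e2, e3, e1', e2']
  ring

/-- The norm of the correction term of a symmetric `J`-invariant form `S`. -/
lemma sum_corr_mul_corr {n : ℕ} (J : V →ₗ[ℝ] V) (hJJ : ∀ v, J (J v) = -v)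
    (hJi : ∀ u v, ⟪J u, J v⟫ = ⟪u, v⟫) (b : OrthonormalBasis (Fin (2 * n)) ℝ V)
    (S : V →ₗ[ℝ] V →ₗ[ℝ] ℝ) (hsymm : ∀ U W, S U W = S W U)
    (hSJ : ∀ U W, S U (J W) = -S (J U) W) :
    ∑ i, ∑ j, ∑ k, ∑ l, corr J S (b i) (b j) (b k) (b l) * corr J S (b i) (b j) (b k) (b l)
      = 8 * (2 * (n + 1)) * ∑ i, ∑ j, S (b i) (b j) ^ 2 := by
  have hinner := inner_J_right J hJJ hJi
  have hself := inner_J_self J hJJ hJi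
  have hnorm (i : Fin (2 * n)) : ⟪b i, b i⟫ = 1 := by simp
  exact sum_corr_mul J hJJ hJi b S
    (fun W X Y => IsLinearMap.mk' (corr J S W X Y)
      ⟨fun u v => by simp only [corr, inner_add_right]; ring,
        fun c u => by simp only [corr, inner_smul_right, smul_eq_mul]; ring⟩) (2 * (n + 1))
    (fun W X Y Z => by
      have h : S (J X) W = -S (J W) X := by rw [hsymm, hSJ]
      simp only [IsLinearMap.mk'_apply, corr, h]
      ring)
    (fun X Y => by
      simp only [IsLinearMap.mk'_apply, corr, Finset.sum_add_distrib, Finset.sum_sub_distrib,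
        ← Finset.mul_sum, hself, hnorm, mul_assoc]
      have e1 := sum_mul_inner b (S.flip Y) X
      have e2 := sum_mul_inner b ((S.flip Y).comp J) (J X)
      have e3 := sum_mul_inner b ((S.flip X).comp J) (J Y)
      simp only [LinearMap.flip_apply, LinearMap.comp_apply, hJJ, map_neg] at e1 e2 e3
      rw [e1, e2, e3, hsymm Y X]
      simp
      ring)
    (fun X Y => by
      simp only [IsLinearMap.mk'_apply, corr, Finset.sum_add_distrib, Finset.sum_sub_distrib,
        ← Finset.mul_sum, hJi, hself, hnorm, hinner, mul_assoc, mul_neg, Finset.sum_neg_distrib]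
      have e1 := sum_mul_inner b (S.flip Y) (J X)
      have e2 := sum_mul_inner b ((S.flip Y).comp J) X
      have e3 := sum_mul_inner b ((S.flip X).comp J) Y
      simp only [LinearMap.flip_apply, LinearMap.comp_apply] at e1 e2 e3
      rw [e1, e2, e3, hsymm (J Y) X, hSJ]
      simp
      ring)
    (fun W X => by
      simp only [IsLinearMap.mk'_apply, corr, Finset.sum_add_distrib, Finset.sum_sub_distrib,
        ← Finset.mul_sum, hJi, hnorm, hinner, mul_assoc, mul_neg, Finset.sum_neg_distrib]
      have e1 := sum_mul_inner b (S X) (J W)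
      have e2 := sum_mul_inner b (S W) (J X)
      have e3 := sum_mul_inner b (S (J X)) W
      have e4 := sum_mul_inner b (S (J W)) X
      rw [e1, e2, e3, e4, hsymm (J X) W, hSJ, hSJ, hsymm (J X) W, hSJ]
      simp
      ring)

end HolomorphicProjective

/-- Norm identities for the holomorphic projective curvature tensor `P`:
`‖P‖² = ⟨P,R⟩ = ‖R‖² − (4/(n+1))‖S‖² ≥ 0`. -/
theorem stmt6 {V : Type*} [NormedAddCommGroup V] [InnerProductSpace ℝ V]
    (J : V →ₗ[ℝ] V) (hJJ : ∀ v, J (J v) = -v)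
    (hJi : ∀ u v, ⟪J u, J v⟫ = ⟪u, v⟫)
    (n : ℕ) (hn : 1 ≤ n) (b : OrthonormalBasis (Fin (2 * n)) ℝ V)
    (R : V →ₗ[ℝ] V →ₗ[ℝ] V →ₗ[ℝ] V →ₗ[ℝ] ℝ)
    (hR1 : ∀ U W X Y : V, R U W X Y = -R W U X Y)
    (hR2 : ∀ U W X Y : V, R U W X Y = -R U W Y X)
    (hR3 : ∀ U W X Y : V, R U W X Y = R X Y U W)
    (hR4 : ∀ U W X Y : V, R U W X Y + R W X U Y + R X U W Y = 0)
    (hR5 : ∀ U W X Y : V, R (J U) (J W) X Y = R U W X Y)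
    (S : V → V → ℝ) (hS : ∀ U W : V, S U W = ∑ i, R (b i) U W (b i))
    (P : V → V → V → V → ℝ)
    (hP : ∀ W X Y Z : V, P W X Y Z =
      R W X Y Z - (1 / (2 * ((n : ℝ) + 1))) *
        (S X Y * ⟪W, Z⟫ - S W Y * ⟪X, Z⟫ + S (J X) Y * ⟪J W, Z⟫
          - S (J W) Y * ⟪J X, Z⟫ - 2 * S (J W) X * ⟪J Y, Z⟫)) :
    (∑ i, ∑ j, ∑ k, ∑ l, P (b i) (b j) (b k) (b l) ^ 2
        = ∑ i, ∑ j, ∑ k, ∑ l, P (b i) (b j) (b k) (b l) * R (b i) (b j) (b k) (b l)) ∧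
    (∑ i, ∑ j, ∑ k, ∑ l, P (b i) (b j) (b k) (b l) * R (b i) (b j) (b k) (b l)
        = ∑ i, ∑ j, ∑ k, ∑ l, R (b i) (b j) (b k) (b l) ^ 2
          - (4 / ((n : ℝ) + 1)) * ∑ i, ∑ j, S (b i) (b j) ^ 2) ∧
    ((4 / ((n : ℝ) + 1)) * ∑ i, ∑ j, S (b i) (b j) ^ 2
        ≤ ∑ i, ∑ j, ∑ k, ∑ l, R (b i) (b j) (b k) (b l) ^ 2) := by
  have hRJ (U W X Y : V) : R U W (J X) (J Y) = R U W X Y := by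
    rw [hR3, hR5, hR3]
  obtain ⟨S, rfl⟩ : ∃ S' : V →ₗ[ℝ] V →ₗ[ℝ] ℝ, S = fun u w => S' u w :=
    ⟨LinearMap.mk₂ ℝ S (by simp [hS, Finset.sum_add_distrib]) (by simp [hS, Finset.mul_sum])
      (by simp [hS, Finset.sum_add_distrib]) (by simp [hS, Finset.mul_sum]), rfl⟩
  simp only at hS hP ⊢
  have hsymm (U W : V) : S U W = S W U := by
    rw [hS, hS]
    refine Finset.sum_congr rfl fun i _ => ?_
    rw [hR3, hR1, hR2, neg_neg]
  have hSJJ (U W : V) : S (J U) (J W) = S U W := by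
    have h := sum_J_J J hJJ hJi b (LinearMap.mk₂ ℝ (fun u v => R u U W v) (by simp) (by simp)
      (by simp) (by simp))
    simp only [LinearMap.mk₂_apply] at h
    rw [hS, hS, ← h]
    refine Finset.sum_congr rfl fun i _ => ?_
    rw [← hR5, ← hRJ, hJJ, hJJ]
    simp
  have hSJ (U W : V) : S U (J W) = -S (J U) W := by
    rw [← hSJJ U (J W), hJJ, map_neg]
  have hRb (X Y : V) : ∑ i, R (b i) X Y (J (b i)) = S (J X) Y := by
    rw [← neg_neg (S (J X) Y), ← hSJ, hS, ← Finset.sum_neg_distrib]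
    refine Finset.sum_congr rfl fun i _ => ?_
    rw [← hRJ, hJJ, map_neg]
  have hRc (W X : V) : ∑ i, R W X (b i) (J (b i)) = -2 * S (J W) X := by
    have h : -2 * S (J W) X = -S (J W) X - S (J W) X := by ring
    rw [h]
    nth_rewrite 2 [← hRb]
    rw [hS, ← Finset.sum_neg_distrib, ← Finset.sum_sub_distrib]
    refine Finset.sum_congr rfl fun i _ => ?_
    -- The Bianchi identity splits this trace into two traces of the previous kinds.
    have hB := hR4 (b i) (J (b i)) W X
    have h1 : R (J (b i)) W (b i) X = R (b i) (J W) X (b i) := by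
      rw [← hR5, hJJ, hR2, hR1, hR1 (b i) (J W)]
      simp
    have h2 : R W (b i) (J (b i)) X = R (b i) W X (J (b i)) := by
      rw [hR1, hR2, neg_neg]
    rw [hR3 W X]
    linarith
  have hTR := sum_corr_mul J hJJ hJi b S (fun W X Y => R W X Y) 1 hR1
    (fun X Y => by rw [← hS, one_mul]) (fun X Y => by rw [hRb, one_mul])
    (fun W X => by rw [hRc]; ring)
  have hTT := sum_corr_mul_corr J hJJ hJi b S hsymm hSJ
  have hn0 : (n : ℝ) + 1 ≠ 0 := by positivity
  have hPc (W X Y Z : V) : P W X Y Z = R W X Y Z - 1 / (2 * ((n : ℝ) + 1)) * corr J S W X Y Z :=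
    hP W X Y Z
  have hPR : ∑ i, ∑ j, ∑ k, ∑ l, P (b i) (b j) (b k) (b l) * R (b i) (b j) (b k) (b l)
      = ∑ i, ∑ j, ∑ k, ∑ l, R (b i) (b j) (b k) (b l) ^ 2
          - (4 / ((n : ℝ) + 1)) * ∑ i, ∑ j, S (b i) (b j) ^ 2 := by
    have h (W X Y Z : V) : P W X Y Z * R W X Y Z
        = R W X Y Z ^ 2 - 1 / (2 * ((n : ℝ) + 1)) * (corr J S W X Y Z * R W X Y Z) := by
      rw [hPc]; ring
    simp only [h, Finset.sum_sub_distrib, ← Finset.mul_sum]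
    rw [hTR]
    field_simp
    ring
  have hPP : ∑ i, ∑ j, ∑ k, ∑ l, P (b i) (b j) (b k) (b l) ^ 2
      = ∑ i, ∑ j, ∑ k, ∑ l, P (b i) (b j) (b k) (b l) * R (b i) (b j) (b k) (b l) := by
    have h (W X Y Z : V) : P W X Y Z ^ 2 = P W X Y Z * R W X Y Z
        - (1 / (2 * ((n : ℝ) + 1)) * (corr J S W X Y Z * R W X Y Z)
          - (1 / (2 * ((n : ℝ) + 1))) ^ 2 * (corr J S W X Y Z * corr J S W X Y Z)) := by
      rw [hPc]; ring
    simp only [h, Finset.sum_sub_distrib, ← Finset.mul_sum]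
    rw [hTR, hTT]
    field_simp
    ring
  refine ⟨hPP, hPR, ?_⟩
  have hpos : 0 ≤ ∑ i, ∑ j, ∑ k, ∑ l, P (b i) (b j) (b k) (b l) ^ 2 :=
    Finset.sum_nonneg fun _ _ => Finset.sum_nonneg fun _ _ => Finset.sum_nonneg fun _ _ =>
      Finset.sum_nonneg fun _ _ => sq_nonneg _
  linarith
end

section
/- For every t ∈ (A, B): −4(m+1)(m+2)·h(t)² − 2(4m+7)·t·h(t)·h'(t) − 2t²·(h'(t)² + h(t)·h''(t)) = −4c(m+1)(m+2). (This is the statement that the scalar curvature of the constructed Kählerian metric is the constant −4c(m+1)(m+2).) -/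
/-!
Squaring removes the root: with `n = 2m + 4` and `w = h² − c`, the defining formula reads
`w tⁿ = a + b t²` on `(A, B)`. Write `S` for the right-hand side; it satisfies the Euler equation
`S'' = S' / t`. Substituting `S = w tⁿ` and dividing by `tⁿ⁻²` gives
`t² w'' + (2n − 1) t w' + n (n − 2) w = 0`. Since `2n − 1 = 4m + 7`,
`n (n − 2) = 4 (m + 1) (m + 2)`, `w' = 2 h h'` and `w'' = 2 (h'² + h h'')`, this is the claim.
-/

/-- The scalar curvature `r = −4(m+1)(m+2)h² − 2(4m+7)t h h' − 2t²(h'² + h h'')` of the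
constructed Kählerian metric, with `h(t) = t^{−(2+m)}√(a + bt² + ct^{4+2m})`, is the
constant `−4c(m+1)(m+2)`. -/
theorem stmt8 (m : ℕ) (hm : 1 ≤ m) (a b c A B : ℝ) (hA : 0 < A) (hAB : A < B)
    (hpos : ∀ t ∈ Set.Ioo A B, 0 < a + b * t ^ 2 + c * t ^ (4 + 2 * m))
    (h h' h'' : ℝ → ℝ)
    (hdef : ∀ t ∈ Set.Ioo A B,
      h t = t ^ (-(2 + (m : ℤ))) * Real.sqrt (a + b * t ^ 2 + c * t ^ (4 + 2 * m)))
    (hd1 : ∀ t ∈ Set.Ioo A B, HasDerivAt h (h' t) t)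
    (hd2 : ∀ t ∈ Set.Ioo A B, HasDerivAt h' (h'' t) t) :
    ∀ t ∈ Set.Ioo A B,
      -4 * ((m : ℝ) + 1) * ((m : ℝ) + 2) * h t ^ 2
        - 2 * (4 * (m : ℝ) + 7) * t * h t * h' t
        - 2 * t ^ 2 * (h' t ^ 2 + h t * h'' t)
      = -4 * c * ((m : ℝ) + 1) * ((m : ℝ) + 2) := by
  -- The square of the defining formula, multiplied by `t ^ (2 * m + 4)`.
  have e0 : ∀ t ∈ Set.Ioo A B, (h t ^ 2 - c) * t ^ (2 * m + 4) = a + b * t ^ 2 := by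
    intro t ht
    have t0 : t ≠ 0 := (hA.trans ht.1).ne'
    have hz : (t ^ (-(2 + (m : ℤ)))) ^ 2 * t ^ (2 * m + 4) = 1 := by
      have hk : t ^ (-(2 + (m : ℤ))) = (t ^ (2 + m))⁻¹ := by
        rw [zpow_neg]
        norm_cast
      rw [hk]
      field_simp
      ring
    rw [hdef t ht, mul_pow, Real.sq_sqrt (hpos t ht).le]
    have hp : t ^ (4 + 2 * m) = t ^ (2 * m + 4) := by rw [add_comm]
    rw [hp]
    linear_combination (a + b * t ^ 2 + c * t ^ (2 * m + 4)) * hz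
  have e1 : ∀ t ∈ Set.Ioo A B,
      2 * (h t * h' t) * t ^ (2 * m + 4)
        + (h t ^ 2 - c) * ((2 * (m : ℝ) + 4) * t ^ (2 * m + 3)) = 2 * b * t := by
    intro t ht
    have hL := (((hd1 t ht).fun_pow 2).sub_const c).fun_mul (hasDerivAt_pow (2 * m + 4) t)
    have hR := ((hasDerivAt_pow 2 t).const_mul b).const_add a
    have hE := hL.unique
      (hR.congr_of_eventuallyEq (Filter.eventually_of_mem (isOpen_Ioo.mem_nhds ht) e0))
    rw [show 2 * m + 4 - 1 = 2 * m + 3 by omega] at hE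
    push_cast at hE
    linear_combination hE
  have e2 : ∀ t ∈ Set.Ioo A B,
      2 * (h' t ^ 2 + h t * h'' t) * t ^ (2 * m + 4)
        + 4 * (h t * h' t) * ((2 * (m : ℝ) + 4) * t ^ (2 * m + 3))
        + (h t ^ 2 - c) * ((2 * (m : ℝ) + 4) * ((2 * (m : ℝ) + 3) * t ^ (2 * m + 2)))
        = 2 * b := by
    intro t ht
    have hL := ((((hd1 t ht).fun_mul (hd2 t ht)).const_mul 2).fun_mul
      (hasDerivAt_pow (2 * m + 4) t)).fun_add
      ((((hd1 t ht).fun_pow 2).sub_const c).fun_mul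
        ((hasDerivAt_pow (2 * m + 3) t).const_mul (2 * (m : ℝ) + 4)))
    have hR := (hasDerivAt_id' t).const_mul (2 * b)
    have hE := hL.unique
      (hR.congr_of_eventuallyEq (Filter.eventually_of_mem (isOpen_Ioo.mem_nhds ht) e1))
    rw [show 2 * m + 4 - 1 = 2 * m + 3 by omega, show 2 * m + 3 - 1 = 2 * m + 2 by omega] at hE
    push_cast at hE
    linear_combination hE
  intro t ht
  have t0 : t ≠ 0 := (hA.trans ht.1).ne'
  -- `t S'' - S' = 0` carries an extra factor `t ^ (2 * m + 3)` compared with the claim.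
  apply mul_right_cancel₀ (pow_ne_zero (2 * m + 3) t0)
  linear_combination e1 t ht - t * e2 t ht
end

section
/- For every t ∈ (A, B): −h(t)·(h(t) + t·h'(t)) = t^{−(4+2m)}·(a(m+1) + b m t² − c t^{4+2m}). (This is the formula for the structure function f of the holomorphic pseudosymmetry condition of the constructed Kählerian metric.) -/
/-!
Write `P(t) = a + b t² + c t^{4+2m}`. The definition of `h` gives `t^{4+2m} h² = P` on the
interval. Differentiating this identity and multiplying by `t / 2` gives
`t^{4+2m} ((2+m) h² + t h h') = t P' / 2`, so `-t^{4+2m} h (h + t h') = (m+1) P - t P' / 2`,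
which is the asserted polynomial.
-/

/-- The structure function `f = −h(h + t h')` of the constructed Kählerian metric, with
`h(t) = t^{−(2+m)}√(a + bt² + ct^{4+2m})`, equals
`t^{−(4+2m)}(a(m+1) + bm t² − c t^{4+2m})`. -/
theorem stmt9 (m : ℕ) (hm : 1 ≤ m) (a b c A B : ℝ) (hA : 0 < A) (hAB : A < B)
    (hpos : ∀ t ∈ Set.Ioo A B, 0 < a + b * t ^ 2 + c * t ^ (4 + 2 * m))
    (h h' : ℝ → ℝ)
    (hdef : ∀ t ∈ Set.Ioo A B,
      h t = t ^ (-(2 + (m : ℤ))) * Real.sqrt (a + b * t ^ 2 + c * t ^ (4 + 2 * m)))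
    (hd1 : ∀ t ∈ Set.Ioo A B, HasDerivAt h (h' t) t) :
    ∀ t ∈ Set.Ioo A B,
      -(h t) * (h t + t * h' t)
        = t ^ (-(4 + 2 * (m : ℤ))) * (a * ((m : ℝ) + 1) + b * (m : ℝ) * t ^ 2
            - c * t ^ (4 + 2 * m)) := by
  intro t ht
  have ht0 : 0 < t := hA.trans ht.1
  -- Clearing the root and the negative power avoids differentiating either of them.
  have key : ∀ s ∈ Set.Ioo A B,
      s ^ (4 + 2 * m) * h s ^ 2 = a + b * s ^ 2 + c * s ^ (4 + 2 * m) := by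
    intro s hs
    have hs0 : s ≠ 0 := (hA.trans hs.1).ne'
    have hz : s ^ (-(2 + (m : ℤ))) = (s ^ (2 + m))⁻¹ := by
      rw [zpow_neg]
      norm_cast
    rw [hdef s hs, mul_pow, Real.sq_sqrt (hpos s hs).le, hz,
      show s ^ (4 + 2 * m) = (s ^ (2 + m)) ^ 2 by ring]
    field_simp
  have hL := (hasDerivAt_pow (4 + 2 * m) t).mul ((hd1 t ht).pow 2)
  have hR := (((hasDerivAt_pow 2 t).const_mul b).const_add a).add
    ((hasDerivAt_pow (4 + 2 * m) t).const_mul c)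
  have hev : (fun s => s ^ (4 + 2 * m) * h s ^ 2)
      =ᶠ[nhds t] fun s => a + b * s ^ 2 + c * s ^ (4 + 2 * m) :=
    Filter.eventuallyEq_of_mem (Ioo_mem_nhds ht.1 ht.2) key
  have hder := hL.unique (hR.congr_of_eventuallyEq hev)
  have hk := key t ht
  have hT : t ^ (4 + 2 * m) = t ^ (3 + 2 * m) * t := by ring
  have hsub : 4 + 2 * m - 1 = 3 + 2 * m := by omega
  have hz : t ^ (-(4 + 2 * (m : ℤ))) = (t ^ (4 + 2 * m))⁻¹ := by
    rw [zpow_neg]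
    norm_cast
  rw [hz, eq_inv_mul_iff_mul_eq₀ (pow_pos ht0 _).ne']
  simp only [hsub, Pi.pow_apply] at hder
  push_cast at hder
  rw [hT] at hder hk ⊢
  linear_combination (-t / 2) * hder + (m + 1) * hk
end

section
/- Assume additionally a ≥ 0, b ≥ 0, c ≤ 0 and a + b > 0. Then the function f(t) = −h(t)·(h(t) + t·h'(t)) is strictly positive for every t ∈ (A, B). In particular, for a = c = 0, b = 1 one has f(t) = m·t^{−(2m+2)}; for a = 1, b = c = 0 one has f(t) = (m+1)·t^{−(2m+4)}; and for a > 0, b = 0, c = −a one has f(t) = a·(1 + (m+1)·t^{−(2m+4)}). -/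
/-!
Clearing the negative power and squaring, the definition of `h` reads
`t ^ (4 + 2m) * h t ^ 2 = a + b t ^ 2 + c t ^ (4 + 2m)` on `(A, B)`. Differentiating this
polynomial identity avoids the square root and gives the closed form
`t ^ (4 + 2m) * f t = (m + 1) a + m b t ^ 2 - c t ^ (4 + 2m)` (`structure_fun_closed_form`).
Under the sign hypotheses every term on the right is nonnegative, and since `a + b > 0` and
`m ≥ 1` one of the first two is positive. The three special cases are read off by dividing
by `t ^ (4 + 2m)`.
-/

/-- Closed form of the structure function `-h (h + t h')`, valid without sign hypotheses on
the coefficients. -/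
lemma structure_fun_closed_form (m : ℕ) (a b c A B : ℝ) (hA : 0 < A)
    (hpos : ∀ t ∈ Set.Ioo A B, 0 < a + b * t ^ 2 + c * t ^ (4 + 2 * m))
    (h h' : ℝ → ℝ)
    (hdef : ∀ t ∈ Set.Ioo A B,
      h t = t ^ (-(2 + (m : ℤ))) * Real.sqrt (a + b * t ^ 2 + c * t ^ (4 + 2 * m)))
    (hd1 : ∀ t ∈ Set.Ioo A B, HasDerivAt h (h' t) t) {t : ℝ} (ht : t ∈ Set.Ioo A B) :
    t ^ (4 + 2 * m) * (-(h t) * (h t + t * h' t)) =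
      (m + 1) * a + m * (b * t ^ 2) - c * t ^ (4 + 2 * m) := by
  have hsq : ∀ s ∈ Set.Ioo A B,
      s ^ (4 + 2 * m) * h s ^ 2 = a + b * s ^ 2 + c * s ^ (4 + 2 * m) := by
    intro s hs
    have hs0 : s ≠ 0 := (hA.trans hs.1).ne'
    have hz : s ^ (-(2 + (m : ℤ))) = (s ^ (2 + m))⁻¹ := by
      rw [zpow_neg]
      norm_cast
    rw [hdef s hs, mul_pow, Real.sq_sqrt (hpos s hs).le, hz, ← mul_assoc, inv_pow, ← pow_mul,
      show (2 + m) * 2 = 4 + 2 * m by ring, mul_inv_cancel₀ (pow_ne_zero _ hs0), one_mul]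
  have hL : HasDerivAt (fun s => s ^ (4 + 2 * m) * h s ^ 2) _ t :=
    (hasDerivAt_pow (4 + 2 * m) t).mul ((hd1 t ht).pow 2)
  have hR : HasDerivAt (fun s => a + b * s ^ 2 + c * s ^ (4 + 2 * m)) _ t :=
    (((hasDerivAt_pow 2 t).const_mul b).const_add a).add
      ((hasDerivAt_pow (4 + 2 * m) t).const_mul c)
  have key := hL.unique (hR.congr_of_eventuallyEq
    (Filter.eventually_of_mem (Ioo_mem_nhds ht.1 ht.2) hsq))
  have hst := hsq t ht
  rw [show 4 + 2 * m - 1 = 3 + 2 * m by omega] at key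
  have hp : t ^ (4 + 2 * m) = t * t ^ (3 + 2 * m) := by ring
  rw [hp] at hst key ⊢
  push_cast at key
  norm_num at key
  linear_combination (m + 1) * hst - t / 2 * key

/-- If `a ≥ 0`, `b ≥ 0`, `c ≤ 0` and `a + b > 0`, the structure function
`f(t) = −h(t)(h(t) + t h'(t))` is strictly positive on `(A,B)`; moreover in the three
particular cases `(a,b,c) = (0,1,0)`, `(1,0,0)` and `(a,0,−a)` with `a > 0` it equals
`m t^{−(2m+2)}`, `(m+1) t^{−(2m+4)}` and `a(1 + (m+1) t^{−(2m+4)})` respectively. -/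
theorem stmt10 (m : ℕ) (hm : 1 ≤ m) (a b c A B : ℝ) (hA : 0 < A) (hAB : A < B)
    (hpos : ∀ t ∈ Set.Ioo A B, 0 < a + b * t ^ 2 + c * t ^ (4 + 2 * m))
    (h h' : ℝ → ℝ)
    (hdef : ∀ t ∈ Set.Ioo A B,
      h t = t ^ (-(2 + (m : ℤ))) * Real.sqrt (a + b * t ^ 2 + c * t ^ (4 + 2 * m)))
    (hd1 : ∀ t ∈ Set.Ioo A B, HasDerivAt h (h' t) t)
    (ha : 0 ≤ a) (hb : 0 ≤ b) (hc : c ≤ 0) (hab : 0 < a + b) :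
    (∀ t ∈ Set.Ioo A B, 0 < -(h t) * (h t + t * h' t)) ∧
    (a = 0 → c = 0 → b = 1 → ∀ t ∈ Set.Ioo A B,
      -(h t) * (h t + t * h' t) = (m : ℝ) * t ^ (-(2 * (m : ℤ) + 2))) ∧
    (a = 1 → b = 0 → c = 0 → ∀ t ∈ Set.Ioo A B,
      -(h t) * (h t + t * h' t) = ((m : ℝ) + 1) * t ^ (-(2 * (m : ℤ) + 4))) ∧
    (0 < a → b = 0 → c = -a → ∀ t ∈ Set.Ioo A B,
      -(h t) * (h t + t * h' t) = a * (1 + ((m : ℝ) + 1) * t ^ (-(2 * (m : ℤ) + 4)))) := by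
  have cf := fun t ht =>
    structure_fun_closed_form m a b c A B hA hpos h h' hdef hd1 (t := t) ht
  have z4 : ∀ t : ℝ, t ^ (-(2 * (m : ℤ) + 4)) = (t ^ (4 + 2 * m))⁻¹ := by
    intro t
    rw [zpow_neg, add_comm]
    norm_cast
  have z2 : ∀ t : ℝ, t ^ (-(2 * (m : ℤ) + 2)) = (t ^ (2 + 2 * m))⁻¹ := by
    intro t
    rw [zpow_neg, add_comm]
    norm_cast
  have hm' : (0 : ℝ) < m := by exact_mod_cast hm
  refine ⟨fun t ht => ?_, ?_, ?_, ?_⟩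
  · have t0 : 0 < t := hA.trans ht.1
    have hP : 0 < t ^ (4 + 2 * m) := by positivity
    refine pos_of_mul_pos_right ?_ hP.le
    rw [cf t ht]
    have hcP : c * t ^ (4 + 2 * m) ≤ 0 := mul_nonpos_of_nonpos_of_nonneg hc hP.le
    have hab' : 0 < (m + 1) * a + m * (b * t ^ 2) := by
      rcases ha.lt_or_eq with ha' | rfl
      · positivity
      · have hb' : 0 < b := by linarith
        positivity
    linarith
  · rintro rfl rfl rfl t ht
    have t0 : t ≠ 0 := (hA.trans ht.1).ne'
    have hP := pow_ne_zero (4 + 2 * m) t0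
    apply mul_left_cancel₀ hP
    rw [cf t ht, z2, show 4 + 2 * m = 2 + (2 + 2 * m) by ring, pow_add t 2]
    field_simp
    ring
  · rintro rfl rfl rfl t ht
    have hP := pow_ne_zero (4 + 2 * m) (hA.trans ht.1).ne'
    apply mul_left_cancel₀ hP
    rw [cf t ht, z4]
    field_simp
    ring
  · rintro - rfl rfl t ht
    have hP := pow_ne_zero (4 + 2 * m) (hA.trans ht.1).ne'
    apply mul_left_cancel₀ hP
    rw [cf t ht, z4]
    field_simp
    ring
end

section
/- For all α, β ∈ {1, …, m} and all p ∈ U, the Lie brackets of the frame fields satisfy: [e_α, e_{β'}](p) = 2 h(t) δ_{αβ} · e_{2m+1}(p), while [e_α, e_β](p) = 0, [e_{α'}, e_{β'}](p) = 0, [e_α, e_{2m+1}](p) = 0, and [e_{α'}, e_{2m+1}](p) = 0. -/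
/-!
Every frame field occurring in the statement has no `∂_t` component, and its coefficients, restricted
to a slice `t = const`, are affine in the remaining coordinates: `eX` and `eZ` are constant along the
slice, and the `∂_z` coefficient of `eY` is linear in `x`. Hence a directional derivative in a direction
tangent to the slice is the slope of an affine function (`fderiv_apply_of_affine`), and the dependence
on `t`, in particular through `h`, only enters via differentiability at `p`. The one nonzero
derivative is that of `eY β` along a tangent direction `v`, namely `(2 v^β / t) ∂_z` (`fderiv_eY`);
for `v = eX α p` this is `(2 δ_{αβ} / t²) ∂_z = 2 h δ_{αβ} e_{2m+1}`.
-/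

/-- Points of `E = ℝ^{2m+2}`, written as tuples `p = (x, y, z, t)` with
`x, y : Fin m → ℝ` and `z, t : ℝ`. -/
abbrev Pt (m : ℕ) : Type := (Fin m → ℝ) × (Fin m → ℝ) × ℝ × ℝ

/-- The Lie bracket of two vector fields: `[V,W](p) = DW_p(V(p)) − DV_p(W(p))`. -/
noncomputable def lieBracket {E : Type*} [NormedAddCommGroup E] [NormedSpace ℝ E]
    (V W : E → E) (p : E) : E :=
  fderiv ℝ W p (V p) - fderiv ℝ V p (W p)

/-- The frame field `e_α(p) = (1/t) ∂_{x^α}`. -/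
noncomputable def eX (m : ℕ) (α : Fin m) (p : Pt m) : Pt m :=
  ((1 / p.2.2.2) • (Pi.single α 1 : Fin m → ℝ), 0, 0, 0)

/-- The frame field `e_{α'}(p) = (1/t) ∂_{y^α} + (2x^α/t) ∂_z`. -/
noncomputable def eY (m : ℕ) (α : Fin m) (p : Pt m) : Pt m :=
  (0, (1 / p.2.2.2) • (Pi.single α 1 : Fin m → ℝ), 2 * p.1 α / p.2.2.2, 0)

/-- The frame field `e_{2m+1}(p) = (1/(t² h(t))) ∂_z`. -/
noncomputable def eZ (m : ℕ) (h : ℝ → ℝ) (p : Pt m) : Pt m :=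
  (0, 0, 1 / (p.2.2.2 ^ 2 * h p.2.2.2), 0)

/-- The frame field `e_{2m+2}(p) = t h(t) ∂_t`. -/
noncomputable def eT (m : ℕ) (h : ℝ → ℝ) (p : Pt m) : Pt m :=
  (0, 0, 0, p.2.2.2 * h p.2.2.2)

/-- If a map differentiable at `p` is affine with slope `u` along the line through `p` in direction
`v`, then `u` is its derivative at `p` in direction `v`. -/
theorem fderiv_apply_of_affine {E F : Type*} [NormedAddCommGroup E] [NormedSpace ℝ E]
    [NormedAddCommGroup F] [NormedSpace ℝ F] {W : E → F} {p v : E} {u : F}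
    (hW : DifferentiableAt ℝ W p) (hu : ∀ s : ℝ, W (p + s • v) = W p + s • u) :
    fderiv ℝ W p v = u := by
  rw [← hW.lineDeriv_eq_fderiv, lineDeriv, funext hu]
  have h1 : HasDerivAt (fun s : ℝ => W p + s • u) ((1 : ℝ) • u) 0 :=
    ((hasDerivAt_id (0 : ℝ)).smul_const u).const_add (W p)
  simpa using h1.deriv

theorem fderiv_eX {m : ℕ} (α : Fin m) {p v : Pt m} (ht : p.2.2.2 ≠ 0) (hv : v.2.2.2 = 0) :
    fderiv ℝ (eX m α) p v = 0 := by
  apply fderiv_apply_of_affine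
  · unfold eX
    fun_prop (disch := assumption)
  · intro s
    simp [eX, hv]

theorem fderiv_eY {m : ℕ} (β : Fin m) {p v : Pt m} (ht : p.2.2.2 ≠ 0) (hv : v.2.2.2 = 0) :
    fderiv ℝ (eY m β) p v = (0, 0, 2 * v.1 β / p.2.2.2, 0) := by
  apply fderiv_apply_of_affine
  · unfold eY
    fun_prop (disch := assumption)
  · intro s
    simp [eY, hv]
    ring

theorem fderiv_eZ {m : ℕ} {h : ℝ → ℝ} {p v : Pt m} (ht : p.2.2.2 ≠ 0) (hh : h p.2.2.2 ≠ 0)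
    (hd : DifferentiableAt ℝ h p.2.2.2) (hv : v.2.2.2 = 0) :
    fderiv ℝ (eZ m h) p v = 0 := by
  apply fderiv_apply_of_affine
  · have hc : DifferentiableAt ℝ (fun q : Pt m => h q.2.2.2) p :=
      hd.comp (f := fun q : Pt m => q.2.2.2) p (by fun_prop)
    have hne : p.2.2.2 ^ 2 * h p.2.2.2 ≠ 0 := mul_ne_zero (pow_ne_zero 2 ht) hh
    unfold eZ
    fun_prop (disch := assumption)
  · intro s
    simp [eZ, hv]

/-- Lie brackets of the frame fields: `[e_α, e_{β'}] = 2h δ_{αβ} e_{2m+1}`, while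
`[e_α,e_β] = [e_{α'},e_{β'}] = [e_α,e_{2m+1}] = [e_{α'},e_{2m+1}] = 0`. -/
theorem stmt11 (m : ℕ) (hm : 1 ≤ m) (A B : ℝ) (hA : 0 < A) (hAB : A < B)
    (h : ℝ → ℝ) (hsm : ContDiffOn ℝ (⊤ : ℕ∞) h (Set.Ioo A B))
    (hne : ∀ t ∈ Set.Ioo A B, h t ≠ 0)
    (α β : Fin m) (p : Pt m) (hp : p.2.2.2 ∈ Set.Ioo A B) :
    lieBracket (eX m α) (eY m β) p
        = (if α = β then 2 * h p.2.2.2 else 0) • eZ m h p ∧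
    lieBracket (eX m α) (eX m β) p = 0 ∧
    lieBracket (eY m α) (eY m β) p = 0 ∧
    lieBracket (eX m α) (eZ m h) p = 0 ∧
    lieBracket (eY m α) (eZ m h) p = 0 := by
  have ht : p.2.2.2 ≠ 0 := (hA.trans hp.1).ne'
  have hh := hne _ hp
  have hd : DifferentiableAt ℝ h p.2.2.2 :=
    (hsm.contDiffAt (isOpen_Ioo.mem_nhds hp)).differentiableAt (by simp)
  have hX : ∀ γ, (eX m γ p).2.2.2 = 0 := fun _ => rfl
  have hY : ∀ γ, (eY m γ p).2.2.2 = 0 := fun _ => rfl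
  have hZ : (eZ m h p).2.2.2 = 0 := rfl
  simp only [lieBracket, fderiv_eX _ ht (hX _), fderiv_eX _ ht (hY _), fderiv_eX _ ht hZ,
    fderiv_eY _ ht (hX _), fderiv_eY _ ht (hY _), fderiv_eY _ ht hZ,
    fderiv_eZ ht hh hd (hX _), fderiv_eZ ht hh hd (hY _)]
  refine ⟨?_, by simp, by simp [eY], by simp, by simp [eZ]⟩
  by_cases hαβ : α = β
  · subst hαβ
    simp [eX, eZ]
    field_simp
  · simp [eX, eZ, hαβ, Ne.symm hαβ]
end

section
/- For all α ∈ {1, …, m} and all p ∈ U, the Lie brackets of the frame fields with e_{2m+2} satisfy: [e_α, e_{2m+2}](p) = h(t) · e_α(p), [e_{α'}, e_{2m+2}](p) = h(t) · e_{α'}(p), and [e_{2m+1}, e_{2m+2}](p) = (2h(t) + t h'(t)) · e_{2m+1}(p), where h' is the derivative of h. -/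
/-- The coordinate `t` as a continuous linear functional on `ℝ^{2m+2}`. -/
noncomputable def tProj (m : ℕ) : Pt m →L[ℝ] ℝ :=
  (ContinuousLinearMap.snd ℝ ℝ ℝ).comp
    ((ContinuousLinearMap.snd ℝ (Fin m → ℝ) (ℝ × ℝ)).comp
      (ContinuousLinearMap.snd ℝ (Fin m → ℝ) ((Fin m → ℝ) × ℝ × ℝ)))

/-- The coordinate `x^α` as a continuous linear functional on `ℝ^{2m+2}`. -/
noncomputable def xProj (m : ℕ) (α : Fin m) : Pt m →L[ℝ] ℝ :=
  (ContinuousLinearMap.proj (R := ℝ) (φ := fun _ : Fin m => ℝ) α).comp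
    (ContinuousLinearMap.fst ℝ (Fin m → ℝ) ((Fin m → ℝ) × ℝ × ℝ))

@[simp] lemma tProj_apply (m : ℕ) (p : Pt m) : tProj m p = p.2.2.2 := rfl

@[simp] lemma xProj_apply (m : ℕ) (α : Fin m) (p : Pt m) : xProj m α p = p.1 α := rfl

lemma hasFDerivAt_comp_t {m : ℕ} {f : ℝ → ℝ} {f' : ℝ} {p : Pt m}
    (hf : HasDerivAt f f' p.2.2.2) :
    HasFDerivAt (fun q : Pt m => f q.2.2.2) (f' • tProj m) p :=
  HasDerivAt.comp_hasFDerivAt (f := fun q : Pt m => q.2.2.2) p hf (tProj m).hasFDerivAt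

lemma hasDerivAt_one_div {t : ℝ} (ht : t ≠ 0) : HasDerivAt (fun s : ℝ => 1 / s) (-(t ^ 2)⁻¹) t := by
  simpa only [one_div] using hasDerivAt_inv ht

lemma hasFDerivAt_eX {m : ℕ} (α : Fin m) {p : Pt m} (ht : p.2.2.2 ≠ 0) :
    HasFDerivAt (eX m α)
      (((-(p.2.2.2 ^ 2)⁻¹ • tProj m).smulRight (Pi.single α 1 : Fin m → ℝ)).prod
        (0 : Pt m →L[ℝ] (Fin m → ℝ) × ℝ × ℝ)) p :=
  ((hasFDerivAt_comp_t (hasDerivAt_one_div ht)).smul_const _).prodMk (hasFDerivAt_const _ _)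

lemma hasFDerivAt_eY {m : ℕ} (α : Fin m) {p : Pt m} (ht : p.2.2.2 ≠ 0) :
    HasFDerivAt (eY m α)
      ((0 : Pt m →L[ℝ] (Fin m → ℝ)).prod
        (((-(p.2.2.2 ^ 2)⁻¹ • tProj m).smulRight (Pi.single α 1 : Fin m → ℝ)).prod
          (((2 * p.1 α) • (-(p.2.2.2 ^ 2)⁻¹ • tProj m)
              + (1 / p.2.2.2) • ((2 : ℝ) • xProj m α)).prod
            (0 : Pt m →L[ℝ] ℝ)))) p := by
  have hinv := hasFDerivAt_comp_t (m := m) (hasDerivAt_one_div ht)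
  have hx : HasFDerivAt (fun q : Pt m => 2 * q.1 α) ((2 : ℝ) • xProj m α) p :=
    (xProj m α).hasFDerivAt.const_mul 2
  have hz := hx.mul hinv
  refine (hasFDerivAt_const _ _).prodMk ((hinv.smul_const _).prodMk
    (HasFDerivAt.prodMk ?_ (hasFDerivAt_const _ _)))
  exact hz.congr_of_eventuallyEq (.of_forall fun q => by simp [div_eq_mul_inv])

lemma hasFDerivAt_eZ {m : ℕ} {h : ℝ → ℝ} {k : ℝ} {p : Pt m} (ht : p.2.2.2 ≠ 0)
    (h0 : h p.2.2.2 ≠ 0) (hd : HasDerivAt h k p.2.2.2) :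
    HasFDerivAt (eZ m h)
      ((0 : Pt m →L[ℝ] (Fin m → ℝ)).prod ((0 : Pt m →L[ℝ] (Fin m → ℝ)).prod
        (((-(2 * p.2.2.2 * h p.2.2.2 + p.2.2.2 ^ 2 * k) / (p.2.2.2 ^ 2 * h p.2.2.2) ^ 2)
            • tProj m).prod
          (0 : Pt m →L[ℝ] ℝ)))) p := by
  have hz : HasDerivAt (fun t => 1 / (t ^ 2 * h t))
      (-(2 * p.2.2.2 * h p.2.2.2 + p.2.2.2 ^ 2 * k) / (p.2.2.2 ^ 2 * h p.2.2.2) ^ 2)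
      p.2.2.2 := by
    have := ((hasDerivAt_pow 2 p.2.2.2).mul hd).inv (mul_ne_zero (pow_ne_zero 2 ht) h0)
    refine (this.congr_of_eventuallyEq (.of_forall fun t => ?_)).congr_deriv ?_
    · simp [one_div]
    · simp
  exact (hasFDerivAt_const _ _).prodMk ((hasFDerivAt_const _ _).prodMk
    ((hasFDerivAt_comp_t hz).prodMk (hasFDerivAt_const _ _)))

lemma hasFDerivAt_eT {m : ℕ} {h : ℝ → ℝ} {k : ℝ} {p : Pt m} (hd : HasDerivAt h k p.2.2.2) :
    HasFDerivAt (eT m h)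
      ((0 : Pt m →L[ℝ] (Fin m → ℝ)).prod ((0 : Pt m →L[ℝ] (Fin m → ℝ)).prod
        ((0 : Pt m →L[ℝ] ℝ).prod ((1 * h p.2.2.2 + p.2.2.2 * k) • tProj m)))) p :=
  (hasFDerivAt_const _ _).prodMk ((hasFDerivAt_const _ _).prodMk
    ((hasFDerivAt_const _ _).prodMk
      (hasFDerivAt_comp_t (f := fun t => t * h t) ((hasDerivAt_id _).mul hd))))

/-- Lie brackets of the frame fields with `e_{2m+2}`: `[e_α, e_{2m+2}] = h e_α`,
`[e_{α'}, e_{2m+2}] = h e_{α'}` and `[e_{2m+1}, e_{2m+2}] = (2h + t h') e_{2m+1}`. -/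
theorem stmt12 (m : ℕ) (hm : 1 ≤ m) (A B : ℝ) (hA : 0 < A) (hAB : A < B)
    (h h' : ℝ → ℝ) (hsm : ContDiffOn ℝ (⊤ : ℕ∞) h (Set.Ioo A B))
    (hne : ∀ t ∈ Set.Ioo A B, h t ≠ 0)
    (hd : ∀ t ∈ Set.Ioo A B, HasDerivAt h (h' t) t)
    (α : Fin m) (p : Pt m) (hp : p.2.2.2 ∈ Set.Ioo A B) :
    lieBracket (eX m α) (eT m h) p = h p.2.2.2 • eX m α p ∧
    lieBracket (eY m α) (eT m h) p = h p.2.2.2 • eY m α p ∧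
    lieBracket (eZ m h) (eT m h) p
      = (2 * h p.2.2.2 + p.2.2.2 * h' p.2.2.2) • eZ m h p := by
  have ht : p.2.2.2 ≠ 0 := (hA.trans hp.1).ne'
  have h0 := hne _ hp
  have hdp := hd _ hp
  refine ⟨?_, ?_, ?_⟩
  · rw [lieBracket, (hasFDerivAt_eT hdp).fderiv, (hasFDerivAt_eX α ht).fderiv]
    ext i <;> simp [eX, eT]
    field_simp
  · rw [lieBracket, (hasFDerivAt_eT hdp).fderiv, (hasFDerivAt_eY α ht).fderiv]
    ext i <;> simp [eY, eT] <;> field_simp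
  · rw [lieBracket, (hasFDerivAt_eT hdp).fderiv, (hasFDerivAt_eZ ht h0 hdp).fderiv]
    ext i <;> simp [eZ, eT]
    field_simp
    ring
end

section
/- For every p ∈ U, the linear map J_p satisfies J_p ∘ J_p = −id on E, and its action on the frame is J_p(e_α(p)) = e_{α'}(p), J_p(e_{α'}(p)) = −e_α(p), J_p(e_{2m+1}(p)) = e_{2m+2}(p), J_p(e_{2m+2}(p)) = −e_{2m+1}(p), for all α ∈ {1,…,m}. -/
/-- The almost complex structure `J_p`, determined by
`J(∂_{x^α}) = ∂_{y^α} + 2x^α ∂_z`, `J(∂_{y^α}) = −∂_{x^α} − 2x^α t³h² ∂_t`,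
`J(∂_z) = t³h² ∂_t`, `J(∂_t) = −(1/(t³h²)) ∂_z`. -/
noncomputable def Jmap (m : ℕ) (h : ℝ → ℝ) (p : Pt m) (u : Pt m) : Pt m :=
  (-u.2.1, u.1,
    2 * ∑ α, p.1 α * u.1 α - u.2.2.2 / (p.2.2.2 ^ 3 * h p.2.2.2 ^ 2),
    p.2.2.2 ^ 3 * h p.2.2.2 ^ 2 * (u.2.2.1 - 2 * ∑ α, p.1 α * u.2.1 α))

/-- `J_p ∘ J_p = −id`, and the action of `J_p` on the frame:
`J e_α = e_{α'}`, `J e_{α'} = −e_α`, `J e_{2m+1} = e_{2m+2}`, `J e_{2m+2} = −e_{2m+1}`. -/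
theorem stmt13 (m : ℕ) (hm : 1 ≤ m) (A B : ℝ) (hA : 0 < A) (hAB : A < B)
    (h : ℝ → ℝ) (hsm : ContDiffOn ℝ (⊤ : ℕ∞) h (Set.Ioo A B))
    (hne : ∀ t ∈ Set.Ioo A B, h t ≠ 0)
    (p : Pt m) (hp : p.2.2.2 ∈ Set.Ioo A B) :
    (∀ u : Pt m, Jmap m h p (Jmap m h p u) = -u) ∧
    (∀ α : Fin m, Jmap m h p (eX m α p) = eY m α p) ∧
    (∀ α : Fin m, Jmap m h p (eY m α p) = -(eX m α p)) ∧
    Jmap m h p (eZ m h p) = eT m h p ∧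
    Jmap m h p (eT m h p) = -(eZ m h p) := by
  have ht : p.2.2.2 ≠ 0 := (hA.trans hp.1).ne'
  have hh : h p.2.2.2 ≠ 0 := hne _ hp
  -- The pairing of `x` with a frame vector `(1/t) ∂_α` has the single term `x^α / t`.
  have hs : ∀ α : Fin m, ∑ β, p.1 β * ((1 / p.2.2.2) • (Pi.single α 1 : Fin m → ℝ)) β
      = p.1 α / p.2.2.2 := by
    intro α
    rw [Finset.sum_eq_single α]
    · simp [div_eq_mul_inv]
    · intro β _ hβ
      simp [Pi.single_eq_of_ne hβ]
    · simp
  refine ⟨fun u => ?_, fun α => ?_, fun α => ?_, ?_, ?_⟩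
  · refine Prod.ext rfl (Prod.ext rfl (Prod.ext ?_ ?_))
    · simp only [Jmap, Pi.neg_apply, mul_neg, Finset.sum_neg_distrib, Prod.snd_neg, Prod.fst_neg]
      field_simp
      ring
    · simp only [Jmap, Prod.snd_neg]
      field_simp
      ring
  · refine Prod.ext (by simp [Jmap, eX, eY]) (Prod.ext rfl (Prod.ext ?_ ?_))
    · simp only [Jmap, eX, eY, hs]
      ring
    · simp [Jmap, eX, eY]
  · refine Prod.ext rfl (Prod.ext (by simp [Jmap, eX, eY]) (Prod.ext ?_ ?_))
    · simp [Jmap, eX, eY]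
    · simp only [Jmap, eX, eY, hs, Prod.snd_neg]
      ring
  · refine Prod.ext (by simp [Jmap, eZ, eT]) (Prod.ext rfl (Prod.ext ?_ ?_))
    · simp [Jmap, eZ, eT]
    · simp only [Jmap, eZ, eT, Pi.zero_apply, mul_zero, Finset.sum_const_zero]
      field_simp
      simp
  · refine Prod.ext rfl (Prod.ext (by simp [Jmap, eZ, eT]) (Prod.ext ?_ ?_))
    · simp only [Jmap, eZ, eT, Pi.zero_apply, mul_zero, Finset.sum_const_zero, Prod.snd_neg,
        Prod.fst_neg]
      field_simp
      simp
    · simp [Jmap, eZ, eT]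
end

section
/- The almost complex structure J is integrable in the sense that its Nijenhuis tensor vanishes: for all continuously differentiable vector fields X, Y : U → E and all p ∈ U, [J X, J Y](p) − J_p([X, J Y](p)) − J_p([J X, Y](p)) − [X, Y](p) = 0, where (J X)(q) := J_q(X(q)) and [·,·] is the Lie bracket of vector fields. -/
/-- The derivative at `p` in the direction `v` of `q ↦ J_q`, applied to the fixed vector `u`. Here
`f` and `f'` stand for the value and the derivative of `t³ h(t)²` at the last coordinate of `p`. -/
noncomputable def dJ (m : ℕ) (f f' : ℝ) (p v u : Pt m) : Pt m :=
  (0, 0,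
    2 * ∑ α, v.1 α * u.1 α + u.2.2.2 * (f' * v.2.2.2) / f ^ 2,
    f' * v.2.2.2 * (u.2.2.1 - 2 * ∑ α, p.1 α * u.2.1 α) - f * (2 * ∑ α, v.1 α * u.2.1 α))

lemma Jmap_sub (m : ℕ) (h : ℝ → ℝ) (p u w : Pt m) :
    Jmap m h p (u - w) = Jmap m h p u - Jmap m h p w := by
  simp only [Jmap, Prod.fst_sub, Prod.snd_sub, Pi.sub_apply, mul_sub, Finset.sum_sub_distrib,
    Prod.mk_sub_mk, Prod.mk.injEq]
  refine ⟨by abel, trivial, by ring, by ring⟩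

lemma Jmap_add (m : ℕ) (h : ℝ → ℝ) (p u w : Pt m) :
    Jmap m h p (u + w) = Jmap m h p u + Jmap m h p w := by
  simp only [Jmap, Prod.fst_add, Prod.snd_add, Pi.add_apply, mul_add, Finset.sum_add_distrib,
    Prod.mk_add_mk, Prod.mk.injEq]
  refine ⟨by abel, trivial, by ring, by ring⟩

lemma Jmap_Jmap (m : ℕ) (h : ℝ → ℝ) (p u : Pt m) (hf : p.2.2.2 ^ 3 * h p.2.2.2 ^ 2 ≠ 0) :
    Jmap m h p (Jmap m h p u) = -u := by
  obtain ⟨a, b, z, t⟩ := u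
  simp only [Jmap, Pi.neg_apply, mul_neg, Finset.sum_neg_distrib, Prod.neg_mk, Prod.mk.injEq]
  refine ⟨trivial, trivial, ?_, ?_⟩
  · rw [mul_div_cancel_left₀ _ hf]; ring
  · rw [sub_right_comm, sub_self, zero_sub, mul_neg, mul_div_cancel₀ _ hf]

/-- Vanishing of the part of the Nijenhuis tensor that is free of derivatives of the vector fields:
only `u`, `w` and first derivatives of `J` enter. -/
lemma dJ_identity (m : ℕ) (h : ℝ → ℝ) (f' : ℝ) (p u w : Pt m)
    (hf : p.2.2.2 ^ 3 * h p.2.2.2 ^ 2 ≠ 0) :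
    dJ m (p.2.2.2 ^ 3 * h p.2.2.2 ^ 2) f' p (Jmap m h p u) w
      - dJ m (p.2.2.2 ^ 3 * h p.2.2.2 ^ 2) f' p (Jmap m h p w) u
    = Jmap m h p (dJ m (p.2.2.2 ^ 3 * h p.2.2.2 ^ 2) f' p u w
      - dJ m (p.2.2.2 ^ 3 * h p.2.2.2 ^ 2) f' p w u) := by
  have comm : ∀ a b : Fin m → ℝ, ∑ α, a α * b α = ∑ α, b α * a α := fun a b =>
    Finset.sum_congr rfl fun _ _ => mul_comm _ _
  obtain ⟨a, b, z, t⟩ := u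
  obtain ⟨a', b', z', t'⟩ := w
  simp only [Jmap, dJ, Pi.neg_apply, neg_mul, Finset.sum_neg_distrib, Prod.mk_sub_mk,
    Prod.mk.injEq, sub_self, neg_zero, Pi.zero_apply, mul_zero, Finset.sum_const_zero]
  generalize p.2.2.2 ^ 3 * h p.2.2.2 ^ 2 = f at hf
  rw [comm b a', comm b' a, comm a' a, comm b' b]
  refine ⟨trivial, trivial, ?_, ?_⟩ <;> field_simp <;> ring

/-- Product rule for `q ↦ J_q (X q)`; division by `t³ h(t)²` is differentiable because `hf` keeps it
nonzero at `p`. -/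
lemma fderiv_Jmap_apply (m : ℕ) (h : ℝ → ℝ) (f' : ℝ) (p : Pt m) (X : Pt m → Pt m)
    (X' : Pt m →L[ℝ] Pt m) (hX : HasFDerivAt X X' p)
    (hf : p.2.2.2 ^ 3 * h p.2.2.2 ^ 2 ≠ 0)
    (hd : HasDerivAt (fun t => t ^ 3 * h t ^ 2) f' p.2.2.2) (v : Pt m) :
    fderiv ℝ (fun q => Jmap m h q (X q)) p v
      = Jmap m h p (X' v) + dJ m (p.2.2.2 ^ 3 * h p.2.2.2 ^ 2) f' p v (X p) := by
  have hid : HasFDerivAt (fun q : Pt m => q) _ p := hasFDerivAt_id (𝕜 := ℝ) p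
  have ht := hid.snd.snd.snd
  have hF := HasDerivAt.comp_hasFDerivAt (f := fun q : Pt m => q.2.2.2) p hd ht
  have hG := HasDerivAt.comp_hasFDerivAt (f := fun q : Pt m => q.2.2.2) p (hd.fun_inv hf) ht
  have hx : ∀ α, HasFDerivAt (fun q : Pt m => q.1 α) _ p := hasFDerivAt_pi'.1 hid.fst
  have hXx : ∀ α, HasFDerivAt (fun q : Pt m => (X q).1 α) _ p := hasFDerivAt_pi'.1 hX.fst
  have hXy : ∀ α, HasFDerivAt (fun q : Pt m => (X q).2.1 α) _ p := hasFDerivAt_pi'.1 hX.snd.fst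
  have s1 := HasFDerivAt.fun_sum (u := Finset.univ) fun α _ => (hx α).mul (hXx α)
  have s2 := HasFDerivAt.fun_sum (u := Finset.univ) fun α _ => (hx α).mul (hXy α)
  have key := hX.snd.fst.neg.prodMk (hX.fst.prodMk
    (((s1.const_mul 2).sub (hX.snd.snd.snd.mul hG)).prodMk
      (hF.mul (hX.snd.snd.fst.sub (s2.const_mul 2)))))
  have key' : HasFDerivAt (fun q => Jmap m h q (X q)) _ p := key
  rw [key'.fderiv]
  simp [Jmap, dJ, Finset.sum_add_distrib]
  simp only [mul_comm ((X p).1 _) (v.1 _), mul_comm ((X p).2.1 _) (v.1 _), mul_assoc]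
  constructor <;> ring

/-- The Nijenhuis tensor of `J` vanishes: for all `C¹` vector fields `X, Y` on
`U = {A < t < B}` and `p ∈ U`,
`[JX,JY](p) − J_p [X,JY](p) − J_p [JX,Y](p) − [X,Y](p) = 0`. -/
theorem stmt14 (m : ℕ) (hm : 1 ≤ m) (A B : ℝ) (hA : 0 < A) (hAB : A < B)
    (h : ℝ → ℝ) (hsm : ContDiffOn ℝ (⊤ : ℕ∞) h (Set.Ioo A B))
    (hne : ∀ t ∈ Set.Ioo A B, h t ≠ 0)
    (X Y : Pt m → Pt m)
    (hX : ContDiffOn ℝ 1 X {q : Pt m | q.2.2.2 ∈ Set.Ioo A B})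
    (hY : ContDiffOn ℝ 1 Y {q : Pt m | q.2.2.2 ∈ Set.Ioo A B})
    (p : Pt m) (hp : p.2.2.2 ∈ Set.Ioo A B) :
    lieBracket (fun q => Jmap m h q (X q)) (fun q => Jmap m h q (Y q)) p
      - Jmap m h p (lieBracket X (fun q => Jmap m h q (Y q)) p)
      - Jmap m h p (lieBracket (fun q => Jmap m h q (X q)) Y p)
      - lieBracket X Y p = 0 := by
  have hU : {q : Pt m | q.2.2.2 ∈ Set.Ioo A B} ∈ nhds p :=
    (isOpen_Ioo.preimage (by fun_prop : Continuous fun q : Pt m => q.2.2.2)).mem_nhds hp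
  have dX := ((hX.contDiffAt hU).differentiableAt one_ne_zero).hasFDerivAt
  have dY := ((hY.contDiffAt hU).differentiableAt one_ne_zero).hasFDerivAt
  have dh : DifferentiableAt ℝ h p.2.2.2 :=
    (hsm.contDiffAt (isOpen_Ioo.mem_nhds hp)).differentiableAt (by simp)
  have hd : DifferentiableAt ℝ (fun t => t ^ 3 * h t ^ 2) p.2.2.2 := by fun_prop
  have hf : p.2.2.2 ^ 3 * h p.2.2.2 ^ 2 ≠ 0 :=
    mul_ne_zero (pow_ne_zero _ (hA.trans hp.1).ne') (pow_ne_zero _ (hne _ hp))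
  have key := dJ_identity m h (deriv (fun t => t ^ 3 * h t ^ 2) p.2.2.2) p (X p) (Y p) hf
  simp only [lieBracket, fderiv_Jmap_apply m h _ p X _ dX hf hd.hasDerivAt,
    fderiv_Jmap_apply m h _ p Y _ dY hf hd.hasDerivAt, Jmap_sub, Jmap_add, Jmap_Jmap m h p _ hf]
    at key ⊢
  rw [sub_eq_iff_eq_add] at key
  rw [key]
  abel
end

section
/- For every p ∈ U: (i) g_p is an inner product on E (a positive-definite symmetric bilinear form); (ii) the frame (e_1(p), …, e_{2m+2}(p)) is orthonormal with respect to g_p; (iii) g_p(J_p u, J_p v) = g_p(u, v) for all u, v ∈ E, i.e. (J, g) is a Hermitian structure. -/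
/-- The Riemannian metric
`g_p(u,v) = t² Σ u_x v_x + t² Σ u_y v_y + t⁴h² (u_z − 2Σ x u_y)(v_z − 2Σ x v_y)
+ u_t v_t/(t²h²)`. -/
noncomputable def gmet (m : ℕ) (h : ℝ → ℝ) (p : Pt m) (u v : Pt m) : ℝ :=
  p.2.2.2 ^ 2 * ∑ α, u.1 α * v.1 α + p.2.2.2 ^ 2 * ∑ α, u.2.1 α * v.2.1 α
    + p.2.2.2 ^ 4 * h p.2.2.2 ^ 2 * (u.2.2.1 - 2 * ∑ α, p.1 α * u.2.1 α)
        * (v.2.2.1 - 2 * ∑ α, p.1 α * v.2.1 α)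
    + u.2.2.2 * v.2.2.2 / (p.2.2.2 ^ 2 * h p.2.2.2 ^ 2)

/-- Positive definiteness: a nonzero vector has one of `u_x`, `u_y`, `η(u)`, `u_t` nonzero, where
`η(u) = u_z − 2 Σ x^α u_{y^α}`. -/
theorem gmet_pos (m : ℕ) (h : ℝ → ℝ) (p : Pt m) (ht : p.2.2.2 ≠ 0) (hh : h p.2.2.2 ≠ 0)
    (u : Pt m) (hu : u ≠ 0) : 0 < gmet m h p u u := by
  obtain ⟨x, y, z, s⟩ := u
  have hx : 0 ≤ ∑ α, x α * x α := Finset.sum_nonneg fun i _ => mul_self_nonneg _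
  have hy : 0 ≤ ∑ α, y α * y α := Finset.sum_nonneg fun i _ => mul_self_nonneg _
  have ht2 : 0 < p.2.2.2 ^ 2 := by positivity
  have hc : 0 < p.2.2.2 ^ 4 * h p.2.2.2 ^ 2 := by positivity
  have hd : 0 < p.2.2.2 ^ 2 * h p.2.2.2 ^ 2 := by positivity
  have h1 := mul_nonneg ht2.le hx
  have h2 := mul_nonneg ht2.le hy
  have h3 := mul_nonneg hc.le (mul_self_nonneg (z - 2 * ∑ α, p.1 α * y α))
  have h4 := div_nonneg (mul_self_nonneg s) hd.le
  simp only [gmet, mul_assoc _ (z - _) (z - _)]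
  by_contra hle
  -- The four nonnegative terms sum to a nonpositive number, so each of them vanishes.
  have e1 : p.2.2.2 ^ 2 * ∑ α, x α * x α = 0 := by linarith
  have e2 : p.2.2.2 ^ 2 * ∑ α, y α * y α = 0 := by linarith
  have e3 : p.2.2.2 ^ 4 * h p.2.2.2 ^ 2 *
      ((z - 2 * ∑ α, p.1 α * y α) * (z - 2 * ∑ α, p.1 α * y α)) = 0 := by linarith
  have e4 : s * s / (p.2.2.2 ^ 2 * h p.2.2.2 ^ 2) = 0 := by linarith
  have x0 : x = 0 := by
    have := (mul_eq_zero.mp e1).resolve_left ht2.ne'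
    rw [Finset.sum_eq_zero_iff_of_nonneg fun i _ => mul_self_nonneg _] at this
    exact funext fun i => mul_self_eq_zero.mp (this i (Finset.mem_univ i))
  have y0 : y = 0 := by
    have := (mul_eq_zero.mp e2).resolve_left ht2.ne'
    rw [Finset.sum_eq_zero_iff_of_nonneg fun i _ => mul_self_nonneg _] at this
    exact funext fun i => mul_self_eq_zero.mp (this i (Finset.mem_univ i))
  have z0 : z = 0 := by
    simpa [y0] using mul_self_eq_zero.mp ((mul_eq_zero.mp e3).resolve_left hc.ne')
  have s0 : s = 0 := mul_self_eq_zero.mp ((div_eq_zero_iff.mp e4).resolve_right hd.ne')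
  exact hu (by rw [x0, y0, z0, s0]; rfl)

/-- `J` is an isometry of `g`: `η(J u) = −u_t / (t³ h²)` and `(J u)_t = t³ h² η(u)`, so the `η` and
`dt` terms are interchanged. -/
theorem gmet_Jmap (m : ℕ) (h : ℝ → ℝ) (p : Pt m) (ht : p.2.2.2 ≠ 0) (hh : h p.2.2.2 ≠ 0)
    (u v : Pt m) : gmet m h p (Jmap m h p u) (Jmap m h p v) = gmet m h p u v := by
  simp only [gmet, Jmap, Pi.neg_apply, neg_mul_neg]
  field_simp
  ring

/-- (i) `g_p` is an inner product (bilinear, symmetric, positive definite);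
(ii) the frame `(e_i(p))` is `g_p`-orthonormal;
(iii) `g_p(J_p u, J_p v) = g_p(u,v)`, i.e. `(J,g)` is a Hermitian structure. -/
theorem stmt15 (m : ℕ) (hm : 1 ≤ m) (A B : ℝ) (hA : 0 < A) (hAB : A < B)
    (h : ℝ → ℝ) (hsm : ContDiffOn ℝ (⊤ : ℕ∞) h (Set.Ioo A B))
    (hne : ∀ t ∈ Set.Ioo A B, h t ≠ 0)
    (p : Pt m) (hp : p.2.2.2 ∈ Set.Ioo A B) :
    (∀ u v w : Pt m, gmet m h p (u + v) w = gmet m h p u w + gmet m h p v w) ∧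
    (∀ (c : ℝ) (u v : Pt m), gmet m h p (c • u) v = c * gmet m h p u v) ∧
    (∀ u v : Pt m, gmet m h p u v = gmet m h p v u) ∧
    (∀ u : Pt m, u ≠ 0 → 0 < gmet m h p u u) ∧
    (∀ α β : Fin m, gmet m h p (eX m α p) (eX m β p) = if α = β then 1 else 0) ∧
    (∀ α β : Fin m, gmet m h p (eY m α p) (eY m β p) = if α = β then 1 else 0) ∧
    (∀ α β : Fin m, gmet m h p (eX m α p) (eY m β p) = 0) ∧
    (∀ α : Fin m, gmet m h p (eX m α p) (eZ m h p) = 0) ∧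
    (∀ α : Fin m, gmet m h p (eX m α p) (eT m h p) = 0) ∧
    (∀ α : Fin m, gmet m h p (eY m α p) (eZ m h p) = 0) ∧
    (∀ α : Fin m, gmet m h p (eY m α p) (eT m h p) = 0) ∧
    gmet m h p (eZ m h p) (eZ m h p) = 1 ∧
    gmet m h p (eZ m h p) (eT m h p) = 0 ∧
    gmet m h p (eT m h p) (eT m h p) = 1 ∧
    (∀ u v : Pt m, gmet m h p (Jmap m h p u) (Jmap m h p v) = gmet m h p u v) := by
  have ht : p.2.2.2 ≠ 0 := (hA.trans hp.1).ne'
  have hh : h p.2.2.2 ≠ 0 := hne _ hp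
  refine ⟨fun u v w => ?_, fun c u v => ?_, fun u v => ?_, gmet_pos m h p ht hh, fun α β => ?_,
    fun α β => ?_, fun α β => ?_, fun α => ?_, fun α => ?_, fun α => ?_, fun α => ?_, ?_, ?_, ?_,
    gmet_Jmap m h p ht hh⟩
  · simp only [gmet, Prod.fst_add, Prod.snd_add, Pi.add_apply, add_mul, mul_add,
      Finset.sum_add_distrib]
    ring
  · simp only [gmet, Prod.smul_fst, Prod.smul_snd, Pi.smul_apply, smul_eq_mul, mul_assoc,
      mul_left_comm _ c, ← Finset.mul_sum]
    ring
  · simp only [gmet, mul_comm (v.1 _), mul_comm (v.2.1 _)]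
    ring
  · by_cases hab : α = β
    · subst hab
      simp [gmet, eX, Pi.single_apply]
      field_simp
    · simp [gmet, eX, Pi.single_apply, hab, Ne.symm hab]
  · by_cases hab : α = β
    · subst hab
      simp [gmet, eY, Pi.single_apply]
      field_simp
      ring
    · simp [gmet, eY, Pi.single_apply, hab, Ne.symm hab]
      field_simp
      simp
  · simp [gmet, eX, eY]
  · simp [gmet, eX, eZ]
  · simp [gmet, eX, eT]
  · simp [gmet, eY, eZ, Pi.single_apply]
    field_simp
    simp
  · simp [gmet, eY, eT]
  · simp [gmet, eZ]
    field_simp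
  · simp [gmet, eZ, eT]
  · simp [gmet, eT]
    field_simp
end
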